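/- arXiv:2310.20368 — 8 statements merged into one kernel-verified Lean document; each statement's English description precedes it below -/
import Mathlib

section
/- Let H be a real Hilbert space, w̄ ∈ H, and let θ, φ be real numbers with 0 ≤ θ and 0 < φ ≤ 1. Let x₋, x, w, z ∈ H satisfy w = x + θ(x − x₋) and ‖z − w̄‖ ≤ ‖w − w̄‖, and set x₊ := (1 − φ)w + φz. Then, with δ := (1 + θ)θ + φ⁻¹(1 − φ)(1 − θ)θ (and θ ≤ 1), ‖x₊ − w̄‖² ≤ ‖x − w̄‖² + θ(‖x − w̄‖² − ‖x₋ − w̄‖²) − φ⁻¹(1 − φ)(1 − θ)‖x₊ − x‖² + δ‖x − x₋‖². -/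
theorem stmt7_aux {H : Type*} [NormedAddCommGroup H] [InnerProductSpace ℝ H] (p q : H) (t : ℝ) :
    ‖p + t • q‖^2 = ‖p‖^2 + 2 * t * inner ℝ p q + t^2 * ‖q‖^2 := by
  rw [norm_add_sq_real, inner_smul_right, norm_smul, mul_pow, Real.norm_eq_abs, sq_abs]
  ring

theorem stmt7 {H : Type*} [NormedAddCommGroup H] [InnerProductSpace ℝ H]
    [CompleteSpace H]
    (wbar : H) (θ φ : ℝ) (hθ0 : 0 ≤ θ) (hθ1 : θ ≤ 1) (hφ0 : 0 < φ) (hφ1 : φ ≤ 1)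
    (xm x w z : H) (hw : w = x + θ • (x - xm)) (hz : ‖z - wbar‖ ≤ ‖w - wbar‖)
    (xp : H) (hxp : xp = (1 - φ) • w + φ • z)
    (δ : ℝ) (hδ : δ = (1 + θ)*θ + φ⁻¹*(1 - φ)*(1 - θ)*θ) :
    ‖xp - wbar‖^2 ≤ ‖x - wbar‖^2 + θ*(‖x - wbar‖^2 - ‖xm - wbar‖^2)
      - φ⁻¹*(1 - φ)*(1 - θ)*‖xp - x‖^2 + δ*‖x - xm‖^2 := by
  have e1 : xp - wbar = (w - wbar) + φ • (z - w) := by rw [hxp]; module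
  have e2 : z - wbar = (w - wbar) + (1:ℝ) • (z - w) := by module
  have e3 : w - wbar = (x - wbar) + θ • (x - xm) := by rw [hw]; module
  have e4 : xm - wbar = (x - wbar) + (-1:ℝ) • (x - xm) := by module
  have e5 : φ • (z - w) = (xp - x) + (-θ) • (x - xm) := by rw [hxp, hw]; module
  have h1 := stmt7_aux (w - wbar) (z - w) φ
  have h2 := stmt7_aux (w - wbar) (z - w) 1
  have h3 := stmt7_aux (x - wbar) (x - xm) θ
  have h4 := stmt7_aux (x - wbar) (x - xm) (-1)
  have h5 := stmt7_aux (xp - x) (x - xm) (-θ)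
  have h6 := stmt7_aux (xp - x) (x - xm) (-1)
  rw [← e1] at h1
  rw [← e2] at h2
  rw [← e3] at h3
  rw [← e4] at h4
  rw [← e5, norm_smul, mul_pow, Real.norm_eq_abs, sq_abs] at h5
  have hz2 : ‖z - wbar‖^2 ≤ ‖w - wbar‖^2 := by gcongr
  have h7 : 0 ≤ ‖(xp - x) + (-1:ℝ) • (x - xm)‖^2 := sq_nonneg _
  rw [h6] at h7
  -- lower bound for the squared step
  have h8 : (1 - θ) * ‖xp - x‖^2 - (1 - θ) * θ * ‖x - xm‖^2 ≤ φ^2 * ‖z - w‖^2 := by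
    nlinarith [mul_nonneg hθ0 h7]
  have hc : 0 ≤ φ⁻¹ * (1 - φ) := mul_nonneg (inv_nonneg.2 hφ0.le) (by linarith)
  have h9 := mul_le_mul_of_nonneg_left h8 hc
  have h10 : φ⁻¹ * (1 - φ) * (φ^2 * ‖z - w‖^2) = φ * (1 - φ) * ‖z - w‖^2 := by
    field_simp
  rw [h10] at h9
  have h11 : ‖xp - wbar‖^2 ≤ ‖w - wbar‖^2 - φ * (1 - φ) * ‖z - w‖^2 := by
    nlinarith [mul_le_mul_of_nonneg_left hz2 hφ0.le]
  have h12 : ‖w - wbar‖^2 = ‖x - wbar‖^2 + θ*(‖x - wbar‖^2 - ‖xm - wbar‖^2)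
      + (1 + θ) * θ * ‖x - xm‖^2 := by
    rw [h3, h4]; ring
  rw [hδ]
  linarith
end

section
/- Let H be a real Hilbert space, w̄ ∈ H and ε > 0. Let {xₙ} be a sequence in H, {θₙ} a nondecreasing sequence with θ₁ = 0 and 0 ≤ θₙ ≤ θₙ₊₁, and {φₙ} a sequence in (0, 1] such that for every n ≥ 1 one of the following holds: (i) φₙ, φₙ₊₁ ∈ (0, 1/2), φₙ⁻¹ − φₙ₊₁⁻¹ + 3 > 0 and θₙ₊₁ ≤ (1/(2(φₙ₊₁⁻¹ − 2)))(φₙ⁻¹ + φₙ₊₁⁻¹ − 1 − Δₙ) with Δₙ := √((φₙ⁻¹ + φₙ₊₁⁻¹ − 1)² − 4(φₙ⁻¹ − 1 − ε)(φₙ₊₁⁻¹ − 2)); or (ii) φₙ = φₙ₊₁ = 1/2 and θₙ₊₁ ≤ (1 − ε)/3; or (iii) φₙ, φₙ₊₁ ∈ (1/2, 1 − ε] and θₙ₊₁ ≤ √(pₙ² + qₙ) − pₙ with pₙ := (φₙ⁻¹ + φₙ₊₁⁻¹ − 1)/(2(2 − φₙ₊₁⁻¹)) and qₙ := (φₙ⁻¹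 − 1 − ε)/(2 − φₙ₊₁⁻¹). Suppose the sequences {wₙ}, {zₙ} in H satisfy wₙ = xₙ + θₙ(xₙ − xₙ₋₁), xₙ₊₁ = (1 − φₙ)wₙ + φₙzₙ and ‖zₙ − w̄‖ ≤ ‖wₙ − w̄‖ for all n ≥ 1. Define δₙ := (1 + θₙ)θₙ + φₙ⁻¹(1 − φₙ)(1 − θₙ)θₙ and Γₙ := ‖xₙ − w̄‖² − θₙ‖xₙ₋₁ − w̄‖² + δₙ‖xₙ − xₙ₋₁‖². Then Γₙ₊₁ ≤ Γₙ − ε‖xₙ₊₁ − xₙ‖² for all n ≥ 1. -/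
/-- Assumption 3.2 of the paper on the inertial factor `θ` and the relaxation
parameter `φ`, at index `n` (one of cases (i), (ii), (iii)). -/
def Assumption32 (ε : ℝ) (θ φ : ℕ → ℝ) (n : ℕ) : Prop :=
  (φ n ∈ Set.Ioo (0:ℝ) (1/2) ∧ φ (n+1) ∈ Set.Ioo (0:ℝ) (1/2) ∧
    0 < (φ n)⁻¹ - (φ (n+1))⁻¹ + 3 ∧
    θ (n+1) ≤ (1/(2*((φ (n+1))⁻¹ - 2))) * ((φ n)⁻¹ + (φ (n+1))⁻¹ - 1 -
      Real.sqrt (((φ n)⁻¹ + (φ (n+1))⁻¹ - 1)^2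
        - 4*((φ n)⁻¹ - 1 - ε)*((φ (n+1))⁻¹ - 2)))) ∨
  (φ n = 1/2 ∧ φ (n+1) = 1/2 ∧ θ (n+1) ≤ (1 - ε)/3) ∨
  (φ n ∈ Set.Ioc (1/2 : ℝ) (1 - ε) ∧ φ (n+1) ∈ Set.Ioc (1/2 : ℝ) (1 - ε) ∧
    θ (n+1) ≤ Real.sqrt ((((φ n)⁻¹ + (φ (n+1))⁻¹ - 1)/(2*(2 - (φ (n+1))⁻¹)))^2
        + ((φ n)⁻¹ - 1 - ε)/(2 - (φ (n+1))⁻¹))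
      - ((φ n)⁻¹ + (φ (n+1))⁻¹ - 1)/(2*(2 - (φ (n+1))⁻¹)))

theorem quad_aux (ε : ℝ) (θ φ : ℕ → ℝ) (n : ℕ) (hs : 0 ≤ θ (n+1))
    (ha : 1 ≤ (φ n)⁻¹) (hb : 1 ≤ (φ (n+1))⁻¹) (h : Assumption32 ε θ φ n) :
    0 ≤ ((φ (n+1))⁻¹ - 2) * θ (n+1)^2 - ((φ n)⁻¹ + (φ (n+1))⁻¹ - 1) * θ (n+1)
      + ((φ n)⁻¹ - 1 - ε) := by
  rcases h with ⟨_, h2, _, h4⟩ | ⟨h1, h2, h3⟩ | ⟨_, h2, h3⟩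
  · have hb2 : 0 < (φ (n+1))⁻¹ - 2 := by
      have : (2:ℝ) < (φ (n+1))⁻¹ := by
        rw [lt_inv_comm₀ (by norm_num) h2.1]
        have := h2.2
        norm_num at this ⊢
        exact this
      linarith
    generalize (φ n)⁻¹ = a at *
    generalize θ (n+1) = s at *
    generalize (φ (n+1))⁻¹ = b at *
    set R := (a + b - 1)^2 - 4*(a - 1 - ε)*(b - 2) with hR
    have hS := Real.sqrt_nonneg R
    have hS2 : R ≤ Real.sqrt R ^ 2 := by
      rcases le_total 0 R with h | h
      · rw [Real.sq_sqrt h]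
      · exact h.trans (sq_nonneg _)
    rw [one_div, ← div_eq_inv_mul, le_div_iff₀ (by linarith)] at h4
    have h5 : Real.sqrt R ≤ (a + b - 1) - 2 * (b - 2) * s := by linarith
    have h6 : Real.sqrt R ^ 2 ≤ ((a + b - 1) - 2 * (b - 2) * s)^2 :=
      pow_le_pow_left₀ hS h5 2
    have h7 : 0 ≤ (b - 2) * ((b - 2) * s^2 - (a + b - 1) * s + (a - 1 - ε)) := by
      nlinarith
    exact nonneg_of_mul_nonneg_right h7 hb2
  · rw [h1, h2]
    norm_num
    linarith
  · have hb2 : 0 < 2 - (φ (n+1))⁻¹ := by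
      have : (φ (n+1))⁻¹ < 2 := by
        rw [inv_lt_comm₀ (by linarith [h2.1]) (by norm_num)]
        have := h2.1
        norm_num at this ⊢
        exact this
      linarith
    generalize (φ n)⁻¹ = a at *
    generalize θ (n+1) = s at *
    generalize (φ (n+1))⁻¹ = b at *
    obtain ⟨p, hp⟩ : ∃ p, p = (a + b - 1) / (2 * (2 - b)) := ⟨_, rfl⟩
    obtain ⟨q, hq⟩ : ∃ q, q = (a - 1 - ε) / (2 - b) := ⟨_, rfl⟩
    have hp0 : 0 < p := by rw [hp]; apply div_pos <;> linarith
    rw [← hp, ← hq] at h3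
    have hpos : 0 < s + p := by linarith
    have h5 : s + p ≤ Real.sqrt (p^2 + q) := by linarith
    have h6 := (Real.le_sqrt' hpos).1 h5
    have e1 : a + b - 1 = p * (2 * (2 - b)) := by rw [hp]; field_simp
    have e2 : a - 1 - ε = q * (2 - b) := by rw [hq]; field_simp
    rw [e1, e2]
    have h7 : 0 ≤ (2 - b) * (q - s^2 - 2 * p * s) :=
      mul_nonneg hb2.le (by nlinarith)
    nlinarith

theorem vec_aux {H : Type*} [NormedAddCommGroup H] [InnerProductSpace ℝ H]
    (u v : H) (a b : ℝ) :
    ‖a • u + b • v‖^2 = a^2 * ‖u‖^2 + 2 * a * b * inner ℝ u v + b^2 * ‖v‖^2 := by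
  rw [norm_add_sq_real, norm_smul, norm_smul, inner_smul_left, inner_smul_right,
    mul_pow, mul_pow, Real.norm_eq_abs, Real.norm_eq_abs, sq_abs, sq_abs]
  simp
  ring

theorem stmt8 {H : Type*} [NormedAddCommGroup H] [InnerProductSpace ℝ H]
    [CompleteSpace H]
    (wbar : H) (ε : ℝ) (hε : 0 < ε)
    (x w z : ℕ → H) (θ φ : ℕ → ℝ)
    (hθ1 : θ 1 = 0) (hθ0 : ∀ n ≥ 1, 0 ≤ θ n) (hθmono : ∀ n ≥ 1, θ n ≤ θ (n+1))
    (hφ : ∀ n ≥ 1, φ n ∈ Set.Ioc (0:ℝ) 1)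
    (h32 : ∀ n ≥ 1, Assumption32 ε θ φ n)
    (hw : ∀ n ≥ 1, w n = x n + θ n • (x n - x (n-1)))
    (hx : ∀ n ≥ 1, x (n+1) = (1 - φ n) • w n + φ n • z n)
    (hz : ∀ n ≥ 1, ‖z n - wbar‖ ≤ ‖w n - wbar‖)
    (δ Γ : ℕ → ℝ)
    (hδ : ∀ n, δ n = (1 + θ n)*θ n + (φ n)⁻¹*(1 - φ n)*(1 - θ n)*θ n)
    (hΓ : ∀ n ≥ 1, Γ n = ‖x n - wbar‖^2 - θ n * ‖x (n-1) - wbar‖^2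
      + δ n * ‖x n - x (n-1)‖^2) :
    ∀ n ≥ 1, Γ (n+1) ≤ Γ n - ε * ‖x (n+1) - x n‖^2 := by
  intro n hn
  have hφn := hφ n hn
  have hφn1 := hφ (n+1) (by omega)
  have ha : 1 ≤ (φ n)⁻¹ := (one_le_inv₀ hφn.1).2 hφn.2
  have hb : 1 ≤ (φ (n+1))⁻¹ := (one_le_inv₀ hφn1.1).2 hφn1.2
  have hs := hθ0 (n+1) (by omega)
  have ht := hθ0 n hn
  have hst := hθmono n hn
  have hq := quad_aux ε θ φ n hs ha hb (h32 n hn)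
  rw [hΓ (n+1) (by omega), hΓ n hn, hδ, hδ, Nat.add_sub_cancel]
  have hcb : (φ (n+1))⁻¹ * (1 - φ (n+1)) = (φ (n+1))⁻¹ - 1 := by
    have := hφn1.1.ne'
    field_simp
  have hca : (φ n)⁻¹ * (1 - φ n) = (φ n)⁻¹ - 1 := by
    have := hφn.1.ne'
    field_simp
  rw [hca, hcb]
  -- relaxation step
  have hZ : ‖z n - wbar‖^2 ≤ ‖w n - wbar‖^2 := pow_le_pow_left₀ (norm_nonneg _) (hz n hn) 2
  have e1 : ‖x (n+1) - wbar‖^2 = (1 - φ n) * ‖w n - wbar‖^2 + φ n * ‖z n - wbar‖^2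
      - ((φ n)⁻¹ - 1) * ‖x (n+1) - w n‖^2 := by
    have h1 : x (n+1) - wbar = (1 - φ n) • (w n - wbar) + φ n • (z n - wbar) := by
      rw [hx n hn]; module
    have h2 : x (n+1) - w n = (-φ n) • (w n - wbar) + φ n • (z n - wbar) := by
      rw [hx n hn]; module
    rw [h1, h2, vec_aux, vec_aux]
    have := hφn.1.ne'
    field_simp
    ring
  -- inertial step
  have e2 : ‖w n - wbar‖^2 = (1 + θ n) * ‖x n - wbar‖^2 - θ n * ‖x (n-1) - wbar‖^2
      + θ n * (1 + θ n) * ‖x n - x (n-1)‖^2 := by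
    have h1 : w n - wbar = (1 + θ n) • (x n - wbar) + (-θ n) • (x (n-1) - wbar) := by
      rw [hw n hn]; module
    have h2 : x n - x (n-1) = (1:ℝ) • (x n - wbar) + (-1:ℝ) • (x (n-1) - wbar) := by
      module
    rw [h1, h2, vec_aux, vec_aux]
    ring
  have e3 : (1 - θ n) * ‖x (n+1) - x n‖^2 - θ n * (1 - θ n) * ‖x n - x (n-1)‖^2
      ≤ ‖x (n+1) - w n‖^2 := by
    have h1 : x (n+1) - w n = (1:ℝ) • (x (n+1) - x n) + (-θ n) • (x n - x (n-1)) := by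
      rw [hw n hn]; module
    have h2 := vec_aux (x (n+1) - x n) (x n - x (n-1)) 1 (-1)
    have h3 := mul_nonneg ht (sq_nonneg ‖(1:ℝ) • (x (n+1) - x n) + (-1:ℝ) • (x n - x (n-1))‖)
    rw [h2] at h3
    rw [h1, vec_aux]
    linarith
  have f1 := mul_le_mul_of_nonneg_left e3 (sub_nonneg.2 ha)
  have f2 := mul_le_mul_of_nonneg_left hZ hφn.1.le
  have f3 := mul_le_mul_of_nonneg_right hst (sq_nonneg ‖x n - wbar‖)
  have f4 := mul_nonneg hq (sq_nonneg ‖x (n+1) - x n‖)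
  have f5 := mul_nonneg (mul_nonneg (sub_nonneg.2 ha) (sub_nonneg.2 hst))
    (sq_nonneg ‖x (n+1) - x n‖)
  have f6 : ‖x (n+1) - wbar‖^2 ≤ ‖w n - wbar‖^2
      - ((φ n)⁻¹ - 1) * ‖x (n+1) - w n‖^2 := by linarith
  rw [e2] at f6
  linarith
end

section
/- Let ε > 0 and θ ∈ [0, 1). Let {γₙ}ₙ≥₁, {dₙ}ₙ≥₁, {δₙ}ₙ≥₁ be sequences of nonnegative real numbers and {θₙ}ₙ≥₁ a sequence with θ₁ = 0 and 0 ≤ θₙ ≤ θ for all n. Define Γₙ := γₙ − θₙγₙ₋₁ + δₙdₙ₋₁ (with γ₀, d₀ ≥ 0 given) and assume Γₙ₊₁ ≤ Γₙ − εdₙ for all n ≥ 1. Then: (a) γₙ ≤ θⁿγ₁ + Γ₁/(1 − θ) for all n ≥ 1, so {γₙ} is bounded; and (b) the series Σₙ dₙ converges, i.e., Σₙ₌₁^∞ dₙ < ∞. -/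
theorem stmt9 (ε θbar : ℝ) (hε : 0 < ε) (hθbar0 : 0 ≤ θbar) (hθbar1 : θbar < 1)
    (γ d δ θ : ℕ → ℝ)
    (hγ : ∀ n, 0 ≤ γ n) (hd : ∀ n, 0 ≤ d n) (hδ : ∀ n, 0 ≤ δ n)
    (hθ1 : θ 1 = 0) (hθ0 : ∀ n, 0 ≤ θ n) (hθb : ∀ n, θ n ≤ θbar)
    (Γ : ℕ → ℝ)
    (hΓ : ∀ n ≥ 1, Γ n = γ n - θ n * γ (n-1) + δ n * d (n-1))
    (hdec : ∀ n ≥ 1, Γ (n+1) ≤ Γ n - ε * d n) :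
    (∀ n ≥ 1, γ n ≤ θbar^n * γ 1 + Γ 1 / (1 - θbar)) ∧ Summable d := by
  have h1 : Γ 1 = γ 1 + δ 1 * d 0 := by
    have := hΓ 1 le_rfl
    simpa [hθ1] using this
  have hδd : ∀ n m, 0 ≤ δ n * d m := fun n m => mul_nonneg (hδ n) (hd m)
  have hγ1 : γ 1 ≤ Γ 1 := by linarith [hδd 1 0]
  have htel : ∀ n, Γ (n+1) + ε * ∑ k ∈ Finset.range n, d (k+1) ≤ Γ 1 := by
    intro n
    induction n with
    | zero => simp
    | succ n ih =>
      rw [Finset.sum_range_succ]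
      have := hdec (n+1) (by omega)
      nlinarith
  have hsum : ∀ n, 0 ≤ ε * ∑ k ∈ Finset.range n, d (k+1) := fun n =>
    mul_nonneg hε.le (Finset.sum_nonneg fun k _ => hd _)
  have hlow : ∀ n, γ (n+1) - θbar * γ n ≤ Γ (n+1) := by
    intro n
    have h := hΓ (n+1) (by omega)
    simp only [Nat.add_sub_cancel] at h
    have := mul_le_mul_of_nonneg_right (hθb (n+1)) (hγ n)
    linarith [hδd (n+1) n]
  have hpos : 0 < 1 - θbar := by linarith
  have hK : Γ 1 = Γ 1 / (1 - θbar) * (1 - θbar) := by field_simp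
  have hK0 : 0 ≤ Γ 1 / (1 - θbar) := div_nonneg ((hγ 1).trans hγ1) hpos.le
  have ha : ∀ n ≥ 1, γ n ≤ θbar^n * γ 1 + Γ 1 / (1 - θbar) := by
    intro n hn
    induction n, hn using Nat.le_induction with
    | base =>
      have := mul_nonneg hθbar0 (hγ 1)
      have := mul_nonneg hθbar0 hK0
      rw [pow_one]
      linarith
    | succ n hn ih =>
      have h := mul_le_mul_of_nonneg_left ih hθbar0
      have e : θbar ^ (n+1) * γ 1 = θbar * (θbar ^ n * γ 1) := by ring
      rw [e]
      linarith [hlow n, htel n, hsum n]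
  refine ⟨ha, ?_⟩
  rw [← summable_nat_add_iff 1]
  refine summable_of_sum_range_le
    (c := (Γ 1 + (γ 0 + γ 1 + Γ 1 / (1 - θbar))) / ε) (fun n => hd _) fun n => ?_
  rw [le_div_iff₀' hε]
  have hb : γ n ≤ γ 0 + γ 1 + Γ 1 / (1 - θbar) := by
    rcases Nat.eq_zero_or_pos n with rfl | hn
    · linarith [hγ 1]
    · have := mul_le_mul_of_nonneg_right (pow_le_one₀ (n := n) hθbar0 hθbar1.le) (hγ 1)
      linarith [ha n hn, hγ 0]
  have h2 := mul_le_mul_of_nonneg_right hθbar1.le (hγ n)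
  linarith [htel n, hlow n, hγ (n+1)]
end

section
/- Let {γₙ}, {ψₙ} and {tₙ} be sequences of nonnegative real numbers such that γₙ₊₁ ≤ γₙ + ψₙ(γₙ − γₙ₋₁) + tₙ for all n ≥ 1, where 0 ≤ ψₙ ≤ ψ < 1 for some constant ψ and Σₙ₌₁^∞ tₙ < ∞. Then limₙ→∞ γₙ exists (i.e., the sequence {γₙ} converges). -/
theorem stmt11 (γ ψ t : ℕ → ℝ) (ψbar : ℝ)
    (hγ : ∀ n, 0 ≤ γ n) (hψ : ∀ n, 0 ≤ ψ n) (ht : ∀ n, 0 ≤ t n)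
    (hψb : ∀ n, ψ n ≤ ψbar) (hψbar : ψbar < 1)
    (hrec : ∀ n ≥ 1, γ (n+1) ≤ γ n + ψ n * (γ n - γ (n-1)) + t n)
    (hts : Summable t) :
    ∃ l : ℝ, Filter.Tendsto γ Filter.atTop (nhds l) := by
  obtain ⟨p, hp⟩ : ∃ p : ℕ → ℝ, ∀ n, p n = max (γ (n+1) - γ n) 0 := ⟨_, fun _ => rfl⟩
  have hp0 : ∀ n, 0 ≤ p n := fun n => by rw [hp]; exact le_max_right _ _
  have hp1 : ∀ n, γ (n+1) - γ n ≤ p n := fun n => by rw [hp]; exact le_max_left _ _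
  have hb0 : 0 ≤ ψbar := (hψ 0).trans (hψb 0)
  have hstep : ∀ n, p (n+1) ≤ ψbar * p n + t (n+1) := by
    intro n
    have h := hrec (n+1) (by omega)
    simp only [Nat.add_sub_cancel] at h
    have h1 : ψ (n+1) * (γ (n+1) - γ n) ≤ ψ (n+1) * p n :=
      mul_le_mul_of_nonneg_left (hp1 n) (hψ _)
    have h2 : ψ (n+1) * p n ≤ ψbar * p n := mul_le_mul_of_nonneg_right (hψb _) (hp0 n)
    rw [hp (n+1)]
    apply max_le
    · linarith
    · have := mul_nonneg hb0 (hp0 n)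
      linarith [ht (n+1)]
  have hsum : ∀ N, ∑ i ∈ Finset.range (N+1), p i ≤
      p 0 + ψbar * ∑ i ∈ Finset.range N, p i + ∑ i ∈ Finset.range (N+1), t i := by
    intro N
    induction N with
    | zero => simpa using ht 0
    | succ k ih =>
      rw [Finset.sum_range_succ p (k+1), Finset.sum_range_succ t (k+1)]
      have h := hstep k
      have e : ψbar * ∑ i ∈ Finset.range (k+1), p i
          = ψbar * ∑ i ∈ Finset.range k, p i + ψbar * p k := by
        rw [Finset.sum_range_succ]; ring
      linarith
  have hps : Summable p := by
    apply summable_of_sum_range_le (c := (p 0 + ∑' i, t i) / (1 - ψbar)) hp0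
    intro N
    rw [le_div_iff₀ (by linarith)]
    have h := hsum N
    rw [Finset.sum_range_succ p] at h
    have h3 := hts.sum_le_tsum (Finset.range (N+1)) (fun i _ => ht i)
    have := hp0 N
    linarith
  have hanti : Antitone (fun n => γ n - ∑ i ∈ Finset.range n, p i) := by
    apply antitone_nat_of_succ_le
    intro n
    rw [Finset.sum_range_succ]
    linarith [hp1 n]
  have hbdd : BddBelow (Set.range (fun n => γ n - ∑ i ∈ Finset.range n, p i)) := by
    refine ⟨-∑' i, p i, ?_⟩
    rintro _ ⟨n, rfl⟩
    have h3 := hps.sum_le_tsum (Finset.range n) (fun i _ => hp0 i)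
    have := hγ n
    simp only
    linarith
  have hl := (tendsto_atTop_ciInf hanti hbdd).add hps.hasSum.tendsto_sum_nat
  exact ⟨_, by simpa using hl⟩
end

section
/- Let H be a real Hilbert space and C ⊆ H. Let F : H × H → ℝ satisfy the Lipschitz-like condition on H with constants a₁ > 0 and a₂ > 0, i.e., F(x, y) + F(y, w) ≥ F(x, w) − a₁‖x − y‖² − a₂‖y − w‖² for all x, y, w. Let {wₙ}, {yₙ}, {zₙ} be sequences in H, let μ ∈ (0, 1) and λ₁ > 0, and define {λₙ} recursively by: λₙ₊₁ = min{ μ(‖wₙ − yₙ‖² + ‖zₙ − yₙ‖²) / (2(F(wₙ, zₙ) − F(wₙ, yₙ) − F(yₙ, zₙ))), λₙ } if F(wₙ, zₙ) − F(wₙ, yₙ) − F(yₙ, zₙ) > 0, and λₙ₊₁ = λₙ otherwise. Then {λₙ} is a monotonically nonincreasing sequence and λₙ ≥ min{ μ/(2 max{a₁, a₂}), λ₁ } for all n ≥ 1. -/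
theorem stmt13 {H : Type*} [NormedAddCommGroup H] [InnerProductSpace ℝ H]
    [CompleteSpace H]
    (C : Set H) (F : H → H → ℝ) (a1 a2 : ℝ) (ha1 : 0 < a1) (ha2 : 0 < a2)
    (hFLip : ∀ x y w : H, F x w - a1*‖x - y‖^2 - a2*‖y - w‖^2 ≤ F x y + F y w)
    (w y z : ℕ → H) (μ lam1 : ℝ) (hμ : μ ∈ Set.Ioo (0:ℝ) 1) (hlam1 : 0 < lam1)
    (lam : ℕ → ℝ) (hl1 : lam 1 = lam1)
    (hrec : ∀ n ≥ 1,
      (0 < F (w n) (z n) - F (w n) (y n) - F (y n) (z n) →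
        lam (n+1) = min (μ*(‖w n - y n‖^2 + ‖z n - y n‖^2) /
          (2*(F (w n) (z n) - F (w n) (y n) - F (y n) (z n)))) (lam n)) ∧
      (¬ 0 < F (w n) (z n) - F (w n) (y n) - F (y n) (z n) →
        lam (n+1) = lam n)) :
    (∀ n ≥ 1, lam (n+1) ≤ lam n) ∧
    (∀ n ≥ 1, min (μ/(2*max a1 a2)) lam1 ≤ lam n) := by
  constructor
  · intro n hn
    by_cases h : 0 < F (w n) (z n) - F (w n) (y n) - F (y n) (z n)
    · rw [(hrec n hn).1 h]
      exact min_le_right _ _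
    · exact ((hrec n hn).2 h).le
  · intro n hn
    induction n, hn using Nat.le_induction with
    | base => rw [hl1]; exact min_le_right _ _
    | succ n hn ih =>
      by_cases h : 0 < F (w n) (z n) - F (w n) (y n) - F (y n) (z n)
      · rw [(hrec n hn).1 h]
        refine le_min (le_trans (min_le_left _ _) ?_) ih
        have hM : 0 < max a1 a2 := lt_max_of_lt_left ha1
        have hL := hFLip (w n) (y n) (z n)
        rw [norm_sub_rev (y n) (z n)] at hL
        have h1 : a1 * ‖w n - y n‖^2 ≤ max a1 a2 * ‖w n - y n‖^2 :=
          mul_le_mul_of_nonneg_right (le_max_left _ _) (sq_nonneg _)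
        have h2 : a2 * ‖z n - y n‖^2 ≤ max a1 a2 * ‖z n - y n‖^2 :=
          mul_le_mul_of_nonneg_right (le_max_right _ _) (sq_nonneg _)
        rw [div_le_div_iff₀ (by positivity) (by positivity)]
        have h3 : F (w n) (z n) - F (w n) (y n) - F (y n) (z n) ≤
            max a1 a2 * (‖w n - y n‖^2 + ‖z n - y n‖^2) := by linarith
        have h4 := mul_le_mul_of_nonneg_left h3 hμ.1.le
        linarith
      · rw [(hrec n hn).2 h]
        exact ih
end

section
/- Let H be a real Hilbert space and let C be a nonempty closed convex subset of H. Let F : H × H → ℝ satisfy: F(x, x) = 0 for all x ∈ C; F is pseudomonotone on C (for all x, y ∈ C, F(x, y) ≥ 0 implies F(y, x) ≤ 0); F satisfies the Lipschitz-like condition on H with constants a₁, a₂ > 0 (F(x, y) + F(y, w) ≥ F(x, w) − a₁‖x − y‖² − a₂‖y − w‖² for all x, y, w); and F(x, ·) is convex for every x. Let w̄ ∈ C satisfy F(w̄, y) ≥ 0 for all y ∈ C. Let μ ∈ (0, 1) and let {λₙ} be the step sizes of Algorithm 3.3. For each n, suppose yₙ is the minimizer over C of y ↦ λₙF(wₙ,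 y) + (1/2)‖wₙ − y‖², ωₙ is a subgradient of F(wₙ, ·) at yₙ such that wₙ − λₙωₙ − yₙ lies in the normal cone of C at yₙ, Tₙ := {x ∈ H : ⟨wₙ − λₙωₙ − yₙ, x − yₙ⟩ ≤ 0}, and zₙ is the minimizer over Tₙ of y ↦ λₙF(yₙ, y) + (1/2)‖wₙ − y‖², where λₙ₊₁ = min{ μ(‖wₙ − yₙ‖² + ‖zₙ − yₙ‖²) / (2(F(wₙ, zₙ) − F(wₙ, yₙ) − F(yₙ, zₙ))), λₙ } when F(wₙ, zₙ) − F(wₙ, yₙ) − F(yₙ, zₙ) > 0 and λₙ₊₁ = λₙ otherwise. Then ‖zₙ − w̄‖² ≤ ‖wₙ − w̄‖² − (1 − λₙμ/λₙ₊₁)(‖wₙ − yₙ‖² + ‖zₙ − yₙ‖²) for every n. -/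
open RealInnerProductSpace

theorem stmt15 {H : Type*} [NormedAddCommGroup H] [InnerProductSpace ℝ H]
    [CompleteSpace H]
    (C : Set H) (hCne : C.Nonempty) (hCcl : IsClosed C) (hCcv : Convex ℝ C)
    (F : H → H → ℝ) (a1 a2 : ℝ) (ha1 : 0 < a1) (ha2 : 0 < a2)
    -- F(x,x) = 0 on C
    (hF0 : ∀ x ∈ C, F x x = 0)
    -- F pseudomonotone on C
    (hFpm : ∀ x ∈ C, ∀ y ∈ C, 0 ≤ F x y → F y x ≤ 0)
    -- Lipschitz-like condition on H
    (hFLip : ∀ x y w : H, F x w - a1*‖x - y‖^2 - a2*‖y - w‖^2 ≤ F x y + F y w)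
    -- F(x, ·) convex
    (hFcv : ∀ x : H, ConvexOn ℝ Set.univ (F x))
    -- w̄ is a solution of the equilibrium problem
    (wbar : H) (hwbar : wbar ∈ C) (hsol : ∀ v ∈ C, 0 ≤ F wbar v)
    (μ : ℝ) (hμ : μ ∈ Set.Ioo (0:ℝ) 1)
    (lam : ℕ → ℝ) (hlampos : ∀ n, 0 < lam n)
    (w y z ω : ℕ → H) (T : ℕ → Set H)
    -- yₙ minimizes λₙ F(wₙ, ·) + ½‖wₙ - ·‖² over C
    (hy : ∀ n, y n ∈ C ∧ ∀ v ∈ C,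
      lam n * F (w n) (y n) + (1/2)*‖w n - y n‖^2
        ≤ lam n * F (w n) v + (1/2)*‖w n - v‖^2)
    -- ωₙ is a subgradient of F(wₙ, ·) at yₙ
    (hω : ∀ n, ∀ v : H, F (w n) (y n) + ⟪v - y n, ω n⟫ ≤ F (w n) v)
    -- wₙ - λₙωₙ - yₙ lies in the normal cone of C at yₙ
    (hN : ∀ n, ∀ v ∈ C, ⟪w n - lam n • ω n - y n, v - y n⟫ ≤ 0)
    (hT : ∀ n, T n = {v : H | ⟪w n - lam n • ω n - y n, v - y n⟫ ≤ 0})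
    -- zₙ minimizes λₙ F(yₙ, ·) + ½‖wₙ - ·‖² over Tₙ
    (hz : ∀ n, z n ∈ T n ∧ ∀ v ∈ T n,
      lam n * F (y n) (z n) + (1/2)*‖w n - z n‖^2
        ≤ lam n * F (y n) v + (1/2)*‖w n - v‖^2)
    -- the self-adaptive step size rule
    (hrec : ∀ n,
      (0 < F (w n) (z n) - F (w n) (y n) - F (y n) (z n) →
        lam (n+1) = min (μ*(‖w n - y n‖^2 + ‖z n - y n‖^2) /
          (2*(F (w n) (z n) - F (w n) (y n) - F (y n) (z n)))) (lam n)) ∧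
      (¬ 0 < F (w n) (z n) - F (w n) (y n) - F (y n) (z n) →
        lam (n+1) = lam n)) :
    ∀ n, ‖z n - wbar‖^2 ≤ ‖w n - wbar‖^2
      - (1 - lam n * μ / lam (n+1)) * (‖w n - y n‖^2 + ‖z n - y n‖^2) := by
  intro n
  have hl := hlampos n
  have hl' := hlampos (n+1)
  obtain ⟨hyC, -⟩ := hy n
  obtain ⟨hzT, hzmin⟩ := hz n
  have hrec1 := (hrec n).1
  have hω1 := hω n (z n)
  have hN1 := hN n wbar hwbar
  rw [hT n] at hzT hzmin
  simp only [Set.mem_ofPred_eq] at hzT hzmin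
  have hpm := hFpm wbar hwbar (y n) hyC (hsol _ hyC)
  have hcv := (hFcv (y n)).2 (Set.mem_univ (z n)) (Set.mem_univ wbar)
  generalize lam (n+1) = l' at *
  generalize lam n = l at *
  generalize w n = w at *
  generalize y n = y at *
  generalize z n = z at *
  generalize ω n = ω at *
  have key : ∀ t : ℝ, 0 < t → t < 1 →
      (1 - t) * ((1/2) * ‖z - wbar‖^2) ≤
        l * (F y wbar - F y z) + (1/2) * ‖w - wbar‖^2 - (1/2) * ‖w - z‖^2 := by
    intro t ht ht1
    have h1 := hzmin ((1 - t) • z + t • wbar) (by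
      have e : (1 - t) • z + t • wbar - y = (1 - t) • (z - y) + t • (wbar - y) := by module
      rw [e, inner_add_right, inner_smul_right, inner_smul_right]
      nlinarith [mul_nonneg (sub_nonneg.2 ht1.le) (neg_nonneg.2 hzT),
        mul_nonneg ht.le (neg_nonneg.2 hN1)])
    have h2 := hcv (by linarith : (0:ℝ) ≤ 1 - t) ht.le (by ring)
    simp only [smul_eq_mul] at h2
    have h2' := mul_le_mul_of_nonneg_left h2 hl.le
    have e1 : ‖w - ((1 - t) • z + t • wbar)‖^2
        = (1 - t) * ‖w - z‖^2 + t * ‖w - wbar‖^2 - t * (1 - t) * ‖z - wbar‖^2 := by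
      have a1 : w - ((1 - t) • z + t • wbar) = (1 - t) • (w - z) + t • (w - wbar) := by module
      have a2 : z - wbar = (w - wbar) - (w - z) := by abel
      rw [a1, a2, norm_add_sq_real, norm_sub_sq_real (w - wbar) (w - z), norm_smul, norm_smul, mul_pow, mul_pow,
        Real.norm_eq_abs, Real.norm_eq_abs, sq_abs, sq_abs, inner_smul_left, inner_smul_right,
        real_inner_comm (w - z) (w - wbar)]
      simp only [conj_trivial]
      ring
    rw [e1] at h1
    refine le_of_mul_le_mul_left ?_ ht
    linarith
  have key2 : (1/2) * ‖z - wbar‖^2 ≤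
        l * (F y wbar - F y z) + (1/2) * ‖w - wbar‖^2 - (1/2) * ‖w - z‖^2 := by
    generalize l * (F y wbar - F y z) + (1/2) * ‖w - wbar‖^2 - (1/2) * ‖w - z‖^2 = R at key ⊢
    have hc : Filter.Tendsto (fun t : ℝ => (1 - t) * ((1/2) * ‖z - wbar‖^2))
        (nhdsWithin 0 (Set.Ioi 0)) (nhds ((1 - 0) * ((1/2) * ‖z - wbar‖^2))) := by
      apply Filter.Tendsto.mono_left _ nhdsWithin_le_nhds
      exact Continuous.tendsto (by fun_prop) 0
    rw [sub_zero, one_mul] at hc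
    refine le_of_tendsto hc ?_
    filter_upwards [Ioo_mem_nhdsGT (zero_lt_one : (0:ℝ) < 1)] with t ht
    exact key t ht.1 ht.2
  have e2 : ‖w - z‖^2 = ‖w - y‖^2 + ‖z - y‖^2 - 2 * ⟪w - y, z - y⟫ := by
    have a : w - z = (w - y) - (z - y) := by abel
    rw [a, norm_sub_sq_real (w - y) (z - y)]
    ring
  have e3 : ⟪w - y, z - y⟫ ≤ l * (F w z - F w y) := by
    have a : w - l • ω - y = (w - y) - l • ω := by abel
    rw [a, inner_sub_left, inner_smul_left, real_inner_comm] at hzT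
    simp only [conj_trivial] at hzT
    rw [real_inner_comm] at hω1
    have := mul_le_mul_of_nonneg_left hω1 hl.le
    rw [real_inner_comm]
    rw [real_inner_comm] at this
    first
      | linarith
      | (rw [real_inner_comm ω (z - y)] at *; linarith)
  have hS : 0 ≤ ‖w - y‖^2 + ‖z - y‖^2 := by positivity
  have e4 : 2 * (F w z - F w y - F y z) ≤ μ / l' * (‖w - y‖^2 + ‖z - y‖^2) := by
    by_cases hD : 0 < F w z - F w y - F y z
    · have h := (hrec1 hD).le.trans (min_le_left _ _)
      rw [le_div_iff₀ (by linarith)] at h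
      rw [div_mul_eq_mul_div, le_div_iff₀ hl']
      linarith
    · have := mul_nonneg (div_nonneg hμ.1.le hl'.le) hS
      linarith
  have e5 := mul_le_mul_of_nonneg_left e4 hl.le
  have e6 := mul_nonneg hl.le (neg_nonneg.2 hpm)
  have e7 : l * μ / l' = l * (μ / l') := by ring
  rw [e7]
  rw [e2] at key2
  linarith
end

section
/- Let H = ℓ²(ℝ) be the real Hilbert space of square-summable sequences and let C = {x ∈ H : ‖x‖ ≤ 1} be the closed unit ball. Define F : C × C → ℝ by F(x, y) = (3 − ‖x‖)⟨x, y − x⟩. Then F is pseudomonotone on C: for all x, y ∈ C, if F(x, y) ≥ 0 then F(y, x) ≤ 0. -/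
open RealInnerProductSpace

theorem stmt17 (x y : lp (fun _ : ℕ => ℝ) 2)
    (hx : ‖x‖ ≤ 1) (hy : ‖y‖ ≤ 1)
    (h : 0 ≤ (3 - ‖x‖) * ⟪x, y - x⟫) :
    (3 - ‖y‖) * ⟪y, x - y⟫ ≤ 0 := by
  have h1 : 0 ≤ ⟪x, y - x⟫ := nonneg_of_mul_nonneg_right h (by linarith)
  have h2 : 0 ≤ ⟪x - y, x - y⟫ := real_inner_self_nonneg
  have h3 : ⟪y, x⟫ = ⟪x, y⟫ := real_inner_comm x y
  apply mul_nonpos_of_nonneg_of_nonpos (by linarith)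
  rw [inner_sub_right] at h1 ⊢
  rw [inner_sub_left, inner_sub_right, inner_sub_right] at h2
  linarith
end

section
/- Let H = ℓ²(ℝ) be the real Hilbert space of square-summable sequences and let C = {x ∈ H : ‖x‖ ≤ 1} be the closed unit ball. Define F : C × C → ℝ by F(x, y) = (3 − ‖x‖)⟨x, y − x⟩. Then F satisfies the Lipschitz-like condition on C with constants a₁ = a₂ = 5/2: for all x, y, w ∈ C, F(x, y) + F(y, w) ≥ F(x, w) − (5/2)‖x − y‖² − (5/2)‖y − w‖². -/
open RealInnerProductSpace

theorem stmt18 (x y w : lp (fun _ : ℕ => ℝ) 2)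
    (hx : ‖x‖ ≤ 1) (hy : ‖y‖ ≤ 1) (hw : ‖w‖ ≤ 1) :
    (3 - ‖x‖) * ⟪x, w - x⟫ - (5/2)*‖x - y‖^2 - (5/2)*‖y - w‖^2
      ≤ (3 - ‖x‖) * ⟪x, y - x⟫ + (3 - ‖y‖) * ⟪y, w - y⟫ := by
  have e : (3 - ‖x‖) * ⟪x, w - x⟫ - (3 - ‖x‖) * ⟪x, y - x⟫ - (3 - ‖y‖) * ⟪y, w - y⟫
      = (3 - ‖x‖) * ⟪x - y, w - y⟫ + (‖y‖ - ‖x‖) * ⟪y, w - y⟫ := by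
    simp only [inner_sub_left, inner_sub_right]
    ring
  have h1 : ⟪x - y, w - y⟫ ≤ ‖x - y‖ * ‖y - w‖ := by
    rw [norm_sub_rev y w]; exact real_inner_le_norm _ _
  have h2 : |⟪y, w - y⟫| ≤ ‖y - w‖ := by
    rw [norm_sub_rev y w]
    exact (abs_real_inner_le_norm _ _).trans (mul_le_of_le_one_left (norm_nonneg _) hy)
  have h3 : |‖y‖ - ‖x‖| ≤ ‖x - y‖ := by
    rw [norm_sub_rev x y]; exact abs_norm_sub_norm_le _ _
  have h4 : (‖y‖ - ‖x‖) * ⟪y, w - y⟫ ≤ ‖x - y‖ * ‖y - w‖ := by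
    refine (le_abs_self _).trans ?_
    rw [abs_mul]
    exact mul_le_mul h3 h2 (abs_nonneg _) (norm_nonneg _)
  have h5 : (3 - ‖x‖) * ⟪x - y, w - y⟫ ≤ (3 - ‖x‖) * (‖x - y‖ * ‖y - w‖) :=
    mul_le_mul_of_nonneg_left h1 (by linarith)
  have h6 : 0 ≤ ‖x‖ * (‖x - y‖ * ‖y - w‖) := by positivity
  have h7 : 0 ≤ ‖x - y‖ * ‖y - w‖ := by positivity
  nlinarith [sq_nonneg (‖x - y‖ - ‖y - w‖)]
end
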